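/- arXiv:1810.11694 — 2 statements merged into one kernel-verified Lean document; each statement's English description precedes it below -/
import Mathlib

section
/- Let K be a field of characteristic zero, V a finite-dimensional K-vector space, and d, e ≥ 1 integers with d + e ≤ dim V. Suppose β : ⋀^d V × ⋀^e V → ⋀^{d+e} V is a K-bilinear map which is GL(V)-equivariant, i.e., β(⋀^d(g)(x), ⋀^e(g)(y)) = ⋀^{d+e}(g)(β(x, y)) for every invertible linear map g : V → V and all x ∈ ⋀^d V, y ∈ ⋀^e V. Then there exists a scalar c ∈ K such that β = c · μ, where μ : ⋀^d V × ⋀^e V → ⋀^{d+e} V is the canonical wedge multiplication (the map induced by the multiplication of the exterior algebra ⋀(V) on its graded components). -/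
/-!
Fix a basis `b` of `V` and compare both bilinear maps on pairs of basis elements
`b_I ∈ ⋀^d V`, `b_J ∈ ⋀^e V`.

Let `g_k` be the dilation doubling `b k` and fixing the other basis vectors. On `⋀^m V` it is
diagonal: `b_S` has eigenvalue `2` if `k ∈ S` and `1` otherwise (`exteriorPowerMap_dilation`).
By equivariance `β(b_I, b_J)` is an eigenvector of `⋀^{d+e}(g_k)`, with eigenvalue the product of
those of `b_I` and `b_J`.

* If some `k` lies in `I ∩ J`, this eigenvalue is `4`, which does not occur on `⋀^{d+e} V`, so
  `β(b_I, b_J) = 0 = b_I ∧ b_J`.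
* For the initial segments `I₀ = {0, …, d-1}` and `J₀ = {d, …, d+e-1}`, each `k ∈ I₀ ∪ J₀` gives
  eigenvalue `2`, so `b_S` can only occur in `β(b_{I₀}, b_{J₀})` if `S ⊇ I₀ ∪ J₀`. Comparing
  cardinalities, `β(b_{I₀}, b_{J₀}) = c • b_{I₀} ∧ b_{J₀}` for some `c`.
* Any other disjoint `I`, `J` are the images of `I₀`, `J₀` under a permutation of the basis, so
  equivariance gives the same constant `c`.
-/

open ExteriorAlgebra

variable {K V : Type*} [Field K] [AddCommGroup V] [Module K V]

/-- The algebra map of the exterior algebra induced by a linear map `g : V → V`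
preserves the `d`-th exterior power. -/
theorem exteriorPower_map_mem (d : ℕ) (g : V →ₗ[K] V) {x : ExteriorAlgebra K V}
    (hx : x ∈ ⋀[K]^d V) : ExteriorAlgebra.map g x ∈ ⋀[K]^d V := by
  have h : Submodule.map (ExteriorAlgebra.map g).toLinearMap (⋀[K]^d V) ≤ ⋀[K]^d V := by
    rw [show (⋀[K]^d V : Submodule K (ExteriorAlgebra K V)) =
        (LinearMap.range (ι K : V →ₗ[K] ExteriorAlgebra K V)) ^ d from rfl,
      Submodule.map_pow]
    refine pow_le_pow_left' ?_ d
    rw [← LinearMap.range_comp, map_comp_ι, LinearMap.range_comp]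
    exact LinearMap.map_le_range
  exact h ⟨x, hx, rfl⟩

/-- The functorial map `⋀^d(g) : ⋀^d V → ⋀^d V` induced by a linear map
`g : V → V`, sending `v₁ ∧ ⋯ ∧ v_d` to `g(v₁) ∧ ⋯ ∧ g(v_d)`. -/
noncomputable def exteriorPowerMap (d : ℕ) (g : V →ₗ[K] V) :
    ⋀[K]^d V →ₗ[K] ⋀[K]^d V :=
  (ExteriorAlgebra.map g).toLinearMap.restrict fun _ hx => exteriorPower_map_mem d g hx

/-- The canonical wedge multiplication `⋀^d V × ⋀^e V → ⋀^{d+e} V`, induced by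
the multiplication of the exterior algebra on its graded components. -/
noncomputable def wedgeMul (d e : ℕ) :
    ⋀[K]^d V →ₗ[K] ⋀[K]^e V →ₗ[K] ⋀[K]^(d + e) V :=
  LinearMap.mk₂ K
    (fun x y => ⟨(x : ExteriorAlgebra K V) * (y : ExteriorAlgebra K V), by
      have := Submodule.mul_mem_mul x.2 y.2
      rwa [← pow_add] at this⟩)
    (fun x x' y => Subtype.ext (by simp [add_mul]))
    (fun c x y => Subtype.ext (by simp [smul_mul_assoc]))
    (fun x y y' => Subtype.ext (by simp [mul_add]))
    (fun c x y => Subtype.ext (by simp [mul_smul_comm]))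

open Module

section EquivariantWedge

variable {n : ℕ}

theorem exteriorPowerMap_ιMulti (m : ℕ) (g : V →ₗ[K] V) (v : Fin m → V) :
    exteriorPowerMap m g (exteriorPower.ιMulti K m v) = exteriorPower.ιMulti K m (g ∘ v) :=
  Subtype.ext (ExteriorAlgebra.map_apply_ιMulti g v)

theorem wedgeMul_ιMulti (d e : ℕ) (v : Fin d → V) (w : Fin e → V) :
    wedgeMul d e (exteriorPower.ιMulti K d v) (exteriorPower.ιMulti K e w) =
      exteriorPower.ιMulti K (d + e) (Fin.append v w) :=
  Subtype.ext (ExteriorAlgebra.ιMulti_mul_ιMulti v w)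

/-- The invertible linear map doubling the basis vector `b k` and fixing the other ones. -/
noncomputable def dilation [CharZero K] (b : Basis (Fin n) K V) (k : Fin n) : V ≃ₗ[K] V :=
  b.equiv (b.unitsSMul fun i => if i = k then Units.mk0 (2 : K) two_ne_zero else 1)
    (Equiv.refl _)

theorem dilation_apply [CharZero K] (b : Basis (Fin n) K V) (k i : Fin n) :
    dilation b k (b i) = (if i = k then (2 : K) else 1) • b i := by
  rw [dilation, Basis.equiv_apply, Basis.unitsSMul_apply]
  by_cases h : i = k <;> simp [h, Units.smul_def]

open Classical in
/-- The eigenvalue of the `k`-th dilation on `b (f 0) ∧ b (f 1) ∧ ⋯`, for injective `f`. -/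
noncomputable def dilationWeight (K : Type*) [Field K] {m : ℕ} (k : Fin n) (f : Fin m → Fin n) :
    K :=
  if k ∈ Set.range f then 2 else 1

theorem exteriorPowerMap_dilation [CharZero K] (b : Basis (Fin n) K V) (k : Fin n) {m : ℕ}
    (f : Fin m → Fin n) (hf : Function.Injective f) :
    exteriorPowerMap m (dilation b k).toLinearMap (exteriorPower.ιMulti K m (b ∘ f)) =
      dilationWeight K k f • exteriorPower.ιMulti K m (b ∘ f) := by
  rw [exteriorPowerMap_ιMulti]
  have h : (dilation b k).toLinearMap ∘ b ∘ f =
      fun i => (if f i = k then (2 : K) else 1) • (b ∘ f) i := by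
    funext i
    simpa using dilation_apply b k (f i)
  rw [h]
  refine ((exteriorPower.ιMulti K m).toMultilinearMap.map_smul_univ _ _).trans ?_
  change (∏ i, if f i = k then (2 : K) else 1) • exteriorPower.ιMulti K m (b ∘ f) = _
  congr 1
  rw [dilationWeight]
  split_ifs with hk
  · obtain ⟨i, rfl⟩ := hk
    simp [hf.eq_iff]
  · exact Finset.prod_eq_one fun i _ => if_neg fun hi => hk ⟨i, hi⟩

/-- The coordinates of an `a`-eigenvector of a dilation vanish at all basis elements whose own
eigenvalue is not `a`. -/
theorem repr_eq_zero_of_dilation [CharZero K] (b : Basis (Fin n) K V) (k : Fin n) {m : ℕ}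
    (z : ⋀[K]^m V) (a : K)
    (hz : exteriorPowerMap m (dilation b k).toLinearMap z = a • z)
    (S : Set.powersetCard (Fin n) m)
    (ha : a ≠ dilationWeight K k (Set.powersetCard.ofFinEmbEquiv.symm S)) :
    (b.exteriorPower m).repr z S = 0 := by
  have key : (b.exteriorPower m).coord S ∘ₗ exteriorPowerMap m (dilation b k).toLinearMap =
      dilationWeight K k (Set.powersetCard.ofFinEmbEquiv.symm S) •
        (b.exteriorPower m).coord S := by
    refine (b.exteriorPower m).ext fun T => ?_
    have hT : exteriorPowerMap m (dilation b k).toLinearMap (b.exteriorPower m T) =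
        dilationWeight K k (Set.powersetCard.ofFinEmbEquiv.symm T) • b.exteriorPower m T := by
      rw [exteriorPower.basis_apply]
      exact exteriorPowerMap_dilation b k _ (Set.powersetCard.ofFinEmbEquiv.symm T).injective
    rw [LinearMap.comp_apply, hT, LinearMap.smul_apply, map_smul, Basis.coord_apply,
      Basis.repr_self]
    by_cases h : T = S
    · rw [h]
    · rw [Finsupp.single_eq_of_ne (Ne.symm h), smul_zero, smul_zero]
  have h := LinearMap.congr_fun key z
  rw [LinearMap.comp_apply, hz, map_smul, LinearMap.smul_apply, smul_eq_mul, smul_eq_mul,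
    Basis.coord_apply] at h
  exact (mul_eq_mul_right_iff.mp h).resolve_left ha

variable {d e : ℕ}

theorem exteriorPowerMap_dilation_equivariant [CharZero K] (b : Basis (Fin n) K V)
    (β : ⋀[K]^d V →ₗ[K] ⋀[K]^e V →ₗ[K] ⋀[K]^(d + e) V)
    (hβ : ∀ (g : V ≃ₗ[K] V) (x : ⋀[K]^d V) (y : ⋀[K]^e V),
      β (exteriorPowerMap d g.toLinearMap x) (exteriorPowerMap e g.toLinearMap y) =
        exteriorPowerMap (d + e) g.toLinearMap (β x y))
    (k : Fin n) (f : Fin d → Fin n) (hf : Function.Injective f)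
    (h : Fin e → Fin n) (hh : Function.Injective h) :
    exteriorPowerMap (d + e) (dilation b k).toLinearMap
        (β (exteriorPower.ιMulti K d (b ∘ f)) (exteriorPower.ιMulti K e (b ∘ h))) =
      (dilationWeight K k f * dilationWeight K k h) •
        β (exteriorPower.ιMulti K d (b ∘ f)) (exteriorPower.ιMulti K e (b ∘ h)) := by
  rw [← hβ, exteriorPowerMap_dilation b k f hf, exteriorPowerMap_dilation b k h hh, map_smul,
    map_smul, LinearMap.smul_apply, smul_smul, mul_comm]

/-- Overlapping index sets: the eigenvalue `4` does not occur on an exterior power. -/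
theorem equivariant_apply_eq_zero [CharZero K] (b : Basis (Fin n) K V)
    (β : ⋀[K]^d V →ₗ[K] ⋀[K]^e V →ₗ[K] ⋀[K]^(d + e) V)
    (hβ : ∀ (g : V ≃ₗ[K] V) (x : ⋀[K]^d V) (y : ⋀[K]^e V),
      β (exteriorPowerMap d g.toLinearMap x) (exteriorPowerMap e g.toLinearMap y) =
        exteriorPowerMap (d + e) g.toLinearMap (β x y))
    (f : Fin d → Fin n) (hf : Function.Injective f)
    (h : Fin e → Fin n) (hh : Function.Injective h) (i : Fin d) (j : Fin e) (hij : f i = h j) :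
    β (exteriorPower.ιMulti K d (b ∘ f)) (exteriorPower.ιMulti K e (b ∘ h)) = 0 := by
  refine (b.exteriorPower (d + e)).repr.map_eq_zero_iff.mp (Finsupp.ext fun S => ?_)
  refine repr_eq_zero_of_dilation b (f i) _ _
    (exteriorPowerMap_dilation_equivariant b β hβ (f i) f hf h hh) S ?_
  rw [dilationWeight, dilationWeight, dilationWeight, if_pos ⟨i, rfl⟩, if_pos ⟨j, hij.symm⟩]
  split_ifs <;> norm_num

/-- The initial segments `{0, …, d-1}` and `{d, …, d+e-1}`: a basis element occurring in the value
of `β` must involve all of the first `d + e` basis vectors. -/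
theorem equivariant_apply_initial [CharZero K] (b : Basis (Fin n) K V) (hde : d + e ≤ n)
    (β : ⋀[K]^d V →ₗ[K] ⋀[K]^e V →ₗ[K] ⋀[K]^(d + e) V)
    (hβ : ∀ (g : V ≃ₗ[K] V) (x : ⋀[K]^d V) (y : ⋀[K]^e V),
      β (exteriorPowerMap d g.toLinearMap x) (exteriorPowerMap e g.toLinearMap y) =
        exteriorPowerMap (d + e) g.toLinearMap (β x y)) :
    ∃ c : K, β (exteriorPower.ιMulti K d (b ∘ Fin.castLE hde ∘ Fin.castAdd e))
        (exteriorPower.ιMulti K e (b ∘ Fin.castLE hde ∘ Fin.natAdd d)) =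
      c • exteriorPower.ιMulti K (d + e) (b ∘ Fin.castLE hde) := by
  set z := β (exteriorPower.ιMulti K d (b ∘ Fin.castLE hde ∘ Fin.castAdd e))
        (exteriorPower.ιMulti K e (b ∘ Fin.castLE hde ∘ Fin.natAdd d)) with hz
  set S₀ : Set.powersetCard (Fin n) (d + e) :=
    Set.powersetCard.ofFinEmbEquiv (Fin.castLEOrderEmb hde) with hS₀
  have hbS₀ : b.exteriorPower (d + e) S₀ =
      exteriorPower.ιMulti K (d + e) (b ∘ Fin.castLE hde) := by
    rw [exteriorPower.basis_apply, exteriorPower.ιMulti_family, hS₀, Equiv.symm_apply_apply]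
    rfl
  refine ⟨(b.exteriorPower (d + e)).repr z S₀, ?_⟩
  rw [← hbS₀]
  refine (b.exteriorPower (d + e)).repr.injective (Finsupp.ext fun S => ?_)
  rw [map_smul, Basis.repr_self, Finsupp.smul_apply, smul_eq_mul]
  by_cases hS : S = S₀
  · rw [hS, Finsupp.single_eq_same, mul_one]
  rw [Finsupp.single_eq_of_ne hS, mul_zero]
  have hcast : Function.Injective (Fin.castLE hde) := Fin.castLE_injective hde
  -- `S` and `S₀` have the same size, so `S ≠ S₀` forces some `k ∈ S₀ \ S`.
  obtain ⟨l, hl⟩ : ∃ l : Fin (d + e),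
      Fin.castLE hde l ∉ Set.range (Set.powersetCard.ofFinEmbEquiv.symm S) := by
    by_contra! hcon
    apply hS
    have hsub : (S₀ : Finset (Fin n)) ⊆ (S : Finset (Fin n)) := by
      intro x hx
      obtain ⟨l, rfl⟩ := (Set.powersetCard.mem_ofFinEmbEquiv_iff_mem_range _ x).mp hx
      exact (Set.powersetCard.mem_range_ofFinEmbEquiv_symm_iff_mem S _).mp (hcon l)
    refine Subtype.ext (Finset.eq_of_subset_of_card_le hsub ?_).symm
    exact (S.2.trans S₀.2.symm).le
  refine repr_eq_zero_of_dilation b (Fin.castLE hde l) _ _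
    (exteriorPowerMap_dilation_equivariant b β hβ _ _ (hcast.comp (Fin.castAdd_injective d e))
      _ (hcast.comp (Fin.natAdd_injective e d))) S ?_
  rw [dilationWeight, dilationWeight, dilationWeight, if_neg hl]
  induction l using Fin.addCases with
  | left i =>
    rw [if_pos ⟨i, rfl⟩, if_neg]
    · norm_num
    · rintro ⟨j, hj⟩
      have := congrArg Fin.val hj
      simp at this
      omega
  | right j =>
    rw [if_neg, if_pos ⟨j, rfl⟩]
    · norm_num
    · rintro ⟨i, hi⟩
      have := congrArg Fin.val hi
      simp at this
      omega

end EquivariantWedge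

/-- Over a field of characteristic zero, with `d, e ≥ 1` and `d + e ≤ dim V`,
every `GL(V)`-equivariant bilinear map `β : ⋀^d V × ⋀^e V → ⋀^{d+e} V` is a
scalar multiple of the canonical wedge multiplication. -/
theorem equivariant_bilinear_eq_smul_wedge [CharZero K] [FiniteDimensional K V]
    (d e : ℕ) (hd : 1 ≤ d) (he : 1 ≤ e) (hde : d + e ≤ Module.finrank K V)
    (β : ⋀[K]^d V →ₗ[K] ⋀[K]^e V →ₗ[K] ⋀[K]^(d + e) V)
    (hβ : ∀ (g : V ≃ₗ[K] V) (x : ⋀[K]^d V) (y : ⋀[K]^e V),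
      β (exteriorPowerMap d g.toLinearMap x) (exteriorPowerMap e g.toLinearMap y) =
        exteriorPowerMap (d + e) g.toLinearMap (β x y)) :
    ∃ c : K, ∀ (x : ⋀[K]^d V) (y : ⋀[K]^e V),
      β x y = c • wedgeMul d e x y := by
  let b := finBasis K V
  obtain ⟨c, hc⟩ := equivariant_apply_initial b hde β hβ
  refine ⟨c, fun x y => ?_⟩
  suffices h : β = c • wedgeMul d e by rw [h]; rfl
  refine (b.exteriorPower d).ext fun I => (b.exteriorPower e).ext fun J => ?_
  rw [exteriorPower.basis_apply, exteriorPower.basis_apply, exteriorPower.ιMulti_family,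
    exteriorPower.ιMulti_family, LinearMap.smul_apply, LinearMap.smul_apply, wedgeMul_ιMulti]
  have hf := (Set.powersetCard.ofFinEmbEquiv.symm I).injective
  have hh := (Set.powersetCard.ofFinEmbEquiv.symm J).injective
  generalize (Set.powersetCard.ofFinEmbEquiv.symm I : Fin d → _) = f at hf ⊢
  generalize (Set.powersetCard.ofFinEmbEquiv.symm J : Fin e → _) = h at hh ⊢
  by_cases hdisj : ∀ i j, f i ≠ h j
  · obtain ⟨σ, hσ⟩ := Equiv.Perm.exists_extending_pair (Fin.castLE hde) (Fin.append f h)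
      (Fin.castLE_injective hde) (Fin.append_injective_iff.mpr ⟨hf, hh, hdisj⟩)
    have key := hβ (b.equiv b σ) (exteriorPower.ιMulti K d (b ∘ Fin.castLE hde ∘ Fin.castAdd e))
        (exteriorPower.ιMulti K e (b ∘ Fin.castLE hde ∘ Fin.natAdd d))
    rw [hc, map_smul, exteriorPowerMap_ιMulti, exteriorPowerMap_ιMulti,
      exteriorPowerMap_ιMulti] at key
    have h1 : (b.equiv b σ).toLinearMap ∘ b ∘ Fin.castLE hde ∘ Fin.castAdd e = b ∘ f := by
      funext i
      simp [hσ]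
    have h2 : (b.equiv b σ).toLinearMap ∘ b ∘ Fin.castLE hde ∘ Fin.natAdd d = b ∘ h := by
      funext i
      simp [hσ]
    have h3 : (b.equiv b σ).toLinearMap ∘ b ∘ Fin.castLE hde =
        Fin.append (b ∘ f) (b ∘ h) := by
      funext i
      induction i using Fin.addCases <;> simp [hσ]
    rwa [h1, h2, h3] at key
  · push Not at hdisj
    obtain ⟨i, j, hij⟩ := hdisj
    rw [equivariant_apply_eq_zero b β hβ f hf h hh i j hij,
      AlternatingMap.map_eq_zero_of_not_injective, smul_zero]
    intro hinj
    exact (Fin.append_injective_iff.mp hinj).2.2 i j (congrArg b hij)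
end

section
/- Let K be a field of characteristic zero, let ℓ_1, …, ℓ_d be nonzero homogeneous degree-one polynomials (linear forms) in K[x_1,…,x_n] that are pairwise non-proportional, with corresponding distinct hyperplanes H_i = {a ∈ K^n : ℓ_i(a) = 0}, and let I = I(H_1 ∪ ⋯ ∪ H_d) be the vanishing ideal of the union. Then for every m ∈ ℕ, the K-dimension of the space of homogeneous polynomials of degree m lying in I equals the binomial coefficient C(m − d + n − 1, n − 1) if m ≥ d, and equals 0 if m < d. Equivalently, the Hilbert series of I is t^d/(1−t)^n. -/
/-!
A polynomial vanishing on the hyperplane of a nonzero linear form `ℓ` is divisible by `ℓ`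
(`dvd_of_vanishes_on_hyperplane`): projecting `K^n` onto the hyperplane along a coordinate axis
transverse to it gives a substitution that kills the polynomial, and that is the identity modulo
`ℓ`. Pairwise non-proportional linear forms are pairwise relatively prime irreducibles, so the
vanishing ideal of the arrangement is the principal ideal generated by the product `P` of the
forms. As `P` is nonzero and homogeneous of degree `d`, multiplication by `P` identifies the forms
of degree `m - d` with the degree `m` component of the ideal (which is zero when `m < d`), and the
former are counted by monomials.
-/


open MvPolynomial

/-- The polynomials vanishing on a subset `S ⊆ K^n` form a `K`-submodule of
`K[x_1,…,x_n]`. -/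
def vanishingSubmodule (K : Type*) [CommSemiring K] (n : ℕ)
    (S : Set (Fin n → K)) : Submodule K (MvPolynomial (Fin n) K) where
  carrier := {p | ∀ a ∈ S, eval a p = 0}
  add_mem' := by
    intro p q hp hq a ha
    simp [map_add, hp a ha, hq a ha]
  zero_mem' := by
    intro a ha
    simp
  smul_mem' := by
    intro c p hp a ha
    simp [smul_eval, hp a ha]

/-- The number of monomials of degree `k` in `n` variables, as a dimension. -/
lemma finrank_homogeneousSubmodule_fin (K : Type*) [Field K] (n k : ℕ) (hn : 1 ≤ n) :
    Module.finrank K ↥(homogeneousSubmodule (Fin n) K k) = (k + n - 1).choose (n - 1) := by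
  have h1 : homogeneousSubmodule (Fin n) K k =
      restrictSupport K {e : Fin n →₀ ℕ | e.degree = k} :=
    homogeneousSubmodule_eq_finsupp_supported (Fin n) K k
  have h2 : {e : Fin n →₀ ℕ | e.degree = k} =
      ↑((Finset.univ : Finset (Fin n)).finsuppAntidiag k) := by
    ext e
    simp [Finsupp.degree_eq_sum]
  rw [h1, Module.finrank_eq_nat_card_basis (basisRestrictSupport K _), h2]
  simp only [Finset.coe_sort_coe, Nat.card_eq_fintype_card, Fintype.card_coe]
  rw [Finset.card_finsuppAntidiag_nat_eq_choose, Finset.card_univ, Fintype.card_fin,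
    add_comm n k]
  exact Nat.choose_symm_of_eq_add (by omega)

lemma exists_coeffs_of_isHomogeneous_one {K : Type*} [Field K] {n : ℕ}
    {l : MvPolynomial (Fin n) K} (hl : l.IsHomogeneous 1) :
    ∃ c : Fin n → K, l = ∑ i, c i • X i := by
  have h : l ∈ homogeneousSubmodule (Fin n) K 1 := hl
  rw [homogeneousSubmodule_one_eq_span_X, Submodule.mem_span_range_iff_exists_fun] at h
  obtain ⟨c, hc⟩ := h
  exact ⟨c, hc.symm⟩

/-- The infinitude of `K` is what makes a polynomial zero as soon as its function is. -/
lemma dvd_of_vanishes_on_hyperplane {K : Type*} [Field K] [Infinite K] {n : ℕ}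
    {l p : MvPolynomial (Fin n) K} (hl : l.IsHomogeneous 1) (hl0 : l ≠ 0)
    (hp : ∀ a, eval a l = 0 → eval a p = 0) : l ∣ p := by
  obtain ⟨c, hc⟩ := exists_coeffs_of_isHomogeneous_one hl
  obtain ⟨j, hj⟩ : ∃ j, c j ≠ 0 := by
    by_contra! h
    exact hl0 (by simp [hc, h])
  -- The projection onto the hyperplane along the `j`-th coordinate axis.
  let f : Fin n → MvPolynomial (Fin n) K := fun i =>
    X i - (Pi.single j (C (c j)⁻¹ * l) : Fin n → MvPolynomial (Fin n) K) i
  have hzero : aeval f p = 0 := by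
    apply MvPolynomial.funext
    intro a
    have he : ∀ q : MvPolynomial (Fin n) K,
        eval a (aeval f q) = eval (fun i => eval a (f i)) q := by
      intro q
      have : (eval a).comp (aeval f : MvPolynomial (Fin n) K →ₐ[K] _).toRingHom =
          eval (fun i => eval a (f i)) := by
        ext <;> simp
      exact congrArg (fun g => g q) this
    rw [he, map_zero]
    apply hp
    have hf : ∀ i, eval a (f i) =
        a i - (Pi.single j ((c j)⁻¹ * eval a l) : Fin n → K) i := by
      intro i
      by_cases h : i = j
      · subst h; simp [f]
      · simp [f, h]
    have hla : eval a l = ∑ i, c i * a i := by simp [hc, smul_eval]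
    have hlf : eval (fun i => eval a (f i)) l = ∑ i, c i * eval a (f i) := by
      rw [hc]; simp [smul_eval]
    rw [hlf]
    simp only [hf, mul_sub, Finset.sum_sub_distrib]
    rw [← hla, Finset.sum_eq_single j (by intro i _ h; simp [h]) (by simp)]
    simp [hj]
  have hmk : (Ideal.Quotient.mkₐ K (Ideal.span {l})).comp (aeval f) =
      Ideal.Quotient.mkₐ K (Ideal.span {l}) := by
    ext i
    simp only [AlgHom.comp_apply, aeval_X, Ideal.Quotient.mkₐ_eq_mk]
    rw [Ideal.Quotient.eq, Ideal.mem_span_singleton]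
    by_cases h : i = j
    · subst h; simp [f]
    · simp [f, h]
  have h3 := congrArg (fun g => g p) hmk
  simp only [AlgHom.comp_apply, hzero, map_zero, Ideal.Quotient.mkₐ_eq_mk] at h3
  exact Ideal.mem_span_singleton.mp (Ideal.Quotient.eq_zero_iff_mem.mp h3.symm)

lemma isRelPrime_of_not_proportional {K : Type*} [Field K] {n : ℕ}
    {l l' : MvPolynomial (Fin n) K} (hl : l.IsHomogeneous 1) (hl0 : l ≠ 0)
    (hl' : l'.IsHomogeneous 1) (hl0' : l' ≠ 0) (h : ∀ c : K, l' ≠ c • l) :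
    IsRelPrime l l' := by
  have hirr : Irreducible l := by
    apply irreducible_of_totalDegree_eq_one (hl.totalDegree hl0)
    intro x hx
    rw [isUnit_iff_ne_zero]
    rintro rfl
    exact hl0 (MvPolynomial.ext _ _ fun i => by simpa using hx i)
  rw [hirr.isRelPrime_iff_not_dvd]
  rintro ⟨q, rfl⟩
  have hq0 : q ≠ 0 := right_ne_zero_of_mul hl0'
  have hdeg := hl'.totalDegree hl0'
  rw [totalDegree_mul_of_isDomain hl0 hq0, hl.totalDegree hl0] at hdeg
  have hq : q.totalDegree = 0 := by omega
  rw [totalDegree_eq_zero_iff_eq_C] at hq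
  exact h (coeff 0 q) (by rw [smul_eq_C_mul, ← hq, mul_comm])

/-- The degree `d + k` component of the principal ideal generated by a form of degree `d`. -/
lemma exists_isHomogeneous_of_dvd {K : Type*} [Field K] {n d k : ℕ}
    {P p : MvPolynomial (Fin n) K} (hP : P.IsHomogeneous d) (hp : p.IsHomogeneous (d + k))
    (h : P ∣ p) : ∃ q : MvPolynomial (Fin n) K, q.IsHomogeneous k ∧ P * q = p := by
  obtain ⟨q, rfl⟩ := h
  letI : GradedAlgebra (homogeneousSubmodule (Fin n) K) := MvPolynomial.gradedAlgebra
  refine ⟨DirectSum.decompose (homogeneousSubmodule (Fin n) K) q k,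
    (DirectSum.decompose (homogeneousSubmodule (Fin n) K) q k).2, ?_⟩
  have h1 := DirectSum.coe_decompose_mul_add_of_left_mem (homogeneousSubmodule (Fin n) K)
    (i := d) (j := k) (a := P) (b := q) hP
  rw [← h1]
  exact DirectSum.decompose_of_mem_same (homogeneousSubmodule (Fin n) K) hp

/-- For the vanishing ideal `I` of a union of `d` distinct hyperplanes in `K^n`
(`K` of characteristic zero), the dimension of the degree-`m` homogeneous
component of `I` is `C(m − d + n − 1, n − 1)` if `m ≥ d` and `0` otherwise;
equivalently, the Hilbert series of `I` is `t^d/(1−t)^n`. -/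
theorem hilbert_function_hyperplane_arrangement (K : Type*) [Field K] [CharZero K]
    (n d : ℕ) (hn : 1 ≤ n) (hd : 1 ≤ d) (ℓ : Fin d → MvPolynomial (Fin n) K)
    (hne : ∀ i, ℓ i ≠ 0) (hhom : ∀ i, (ℓ i).IsHomogeneous 1)
    (hdist : ∀ i j, i ≠ j → ∀ c : K, ℓ i ≠ c • ℓ j) (m : ℕ) :
    Module.finrank K
      ↥(homogeneousSubmodule (Fin n) K m ⊓
        vanishingSubmodule K n {a : Fin n → K | ∃ i, eval a (ℓ i) = 0}) =
      if d ≤ m then (m - d + n - 1).choose (n - 1) else 0 := by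
  set P : MvPolynomial (Fin n) K := ∏ i, ℓ i with hPdef
  have hP0 : P ≠ 0 := Finset.prod_ne_zero_iff.mpr fun i _ => hne i
  have hPhom : P.IsHomogeneous d := by
    simpa using IsHomogeneous.prod Finset.univ ℓ (fun _ => 1) fun i _ => hhom i
  have hmem : ∀ p : MvPolynomial (Fin n) K,
      p ∈ vanishingSubmodule K n {a : Fin n → K | ∃ i, eval a (ℓ i) = 0} ↔ P ∣ p := by
    intro p
    constructor
    · intro hp
      apply Finset.prod_dvd_of_isRelPrime
      · intro i _ j _ hij
        exact isRelPrime_of_not_proportional (hhom i) (hne i) (hhom j) (hne j)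
          (hdist j i hij.symm)
      · intro i _
        exact dvd_of_vanishes_on_hyperplane (hhom i) (hne i) fun a ha => hp a ⟨i, ha⟩
    · rintro ⟨q, rfl⟩ a ⟨i, hi⟩
      rw [map_mul, hPdef, map_prod, Finset.prod_eq_zero (Finset.mem_univ i) hi, zero_mul]
  split_ifs with hdm
  · obtain ⟨k, rfl⟩ := Nat.exists_eq_add_of_le hdm
    have hinj : Function.Injective (LinearMap.mulLeft K P) := fun x y hxy =>
      mul_left_cancel₀ hP0 hxy
    have heq : homogeneousSubmodule (Fin n) K (d + k) ⊓
        vanishingSubmodule K n {a : Fin n → K | ∃ i, eval a (ℓ i) = 0} =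
        (homogeneousSubmodule (Fin n) K k).map (LinearMap.mulLeft K P) := by
      ext p
      rw [Submodule.mem_inf, hmem, Submodule.mem_map]
      constructor
      · rintro ⟨h1, h2⟩
        exact exists_isHomogeneous_of_dvd hPhom h1 h2
      · rintro ⟨q, hq, rfl⟩
        exact ⟨hPhom.mul hq, dvd_mul_right P q⟩
    rw [heq, ← (Submodule.equivMapOfInjective _ hinj _).finrank_eq,
      finrank_homogeneousSubmodule_fin K n k hn, Nat.add_sub_cancel_left]
  · have hbot : homogeneousSubmodule (Fin n) K m ⊓
        vanishingSubmodule K n {a : Fin n → K | ∃ i, eval a (ℓ i) = 0} = ⊥ := by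
      rw [Submodule.eq_bot_iff]
      intro p hp
      rw [Submodule.mem_inf, hmem] at hp
      obtain ⟨h1, q, rfl⟩ := hp
      by_contra h0
      have hdeg := IsHomogeneous.totalDegree h1 h0
      rw [totalDegree_mul_of_isDomain hP0 (right_ne_zero_of_mul h0),
        hPhom.totalDegree hP0] at hdeg
      omega
    rw [hbot, finrank_bot]
end
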